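/- arXiv:1807.07829 — 3 statements merged into one kernel-verified Lean document; each statement's English description precedes it below -/
import Mathlib

section
/- Fix Bob's orthonormal bases {φ_x^a} and let Alice's bases be their entrywise complex conjugates, ψ_x^a := conj(φ_x^a). Let Z_Q be the set of values Σ_{x=1}^N Σ_{a=1}^d Tr((|ψ_x^a⟩⟨ψ_x^a| ⊗ |φ_x^a⟩⟨φ_x^a|) ρ) as ρ ranges over all density matrices on ℂ^{d·d}, and let Z_S be the set of values S_S := Σ_{x=1}^N Σ_{a=1}^d Σ_{λ∈Λ} p(λ) ⟨ψ_x^a, ρ_λ^A ψ_x^a⟩ ⟨φ_x^a, ρ_λ^B φ_x^a⟩ over all quantum separable models. Then sup Z_Q ≥ (N / S^{AB}) · sup Z_S, where S^{AB} := Σ_{k=1}^{dN} (s_k^A − s_{k−1}^A)(s_k^B − s_{k−1}^B); in particular the maximal quantum value exceeds the maximal separable value by a factor of at least N / S^{AB}. -/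
/-!
The bound follows from `sup Z_S ≤ S^{AB}` and `N ≤ sup Z_Q`.

*Separable side.* For a density matrix `ρ`, the outcome probabilities `α_q = Tr (P_q ρ)`,
`q = (x, a)`, are nonnegative, and the sum of any `k` of them is at most `s_k`, because
`Re Tr (M ρ) ≤ ‖M‖` (`re_trace_mul_le`). Sort `α` decreasingly and put `u_k = s_k - s_{k-1}`. Abel
summation gives `∑ α_k² ≤ ∑ u_k α_k`, and `u_k α_k ≤ (u_k² + α_k²) / 2` then gives
`∑ α_k² ≤ ∑ u_k²` (`sum_sq_prob_le`). This does not need `u` to be monotone, which it may fail to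
be. As Alice's vectors are the conjugates of Bob's, `s_k^A = s_k^B` (`sMax_conj`), so `S^{AB}` is
`∑ u_k²`, and `∑ α_q β_q ≤ ∑ (α_q² + β_q²) / 2 ≤ S^{AB}`.

*Quantum side.* The maximally entangled state gives each term `Tr ((P̄ ⊗ P) ρ)` the value `1 / d`,
hence the total value `N` (`maxEntangled_value`); `Z_Q` is bounded above by `re_trace_mul_le`.
-/

open scoped ComplexOrder

noncomputable section

/-- `|v⟩⟨v|`, the rank-one projection matrix associated with the vector `v`. -/
def rankOneProj {n : Type*} [Fintype n] (v : n → ℂ) : Matrix n n ℂ :=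
  Matrix.vecMulVec v (star v)

/-- The operator (spectral) norm of a complex matrix. -/
def opNorm {n : Type*} [Fintype n] [DecidableEq n] (M : Matrix n n ℂ) : ℝ :=
  ‖Matrix.toEuclideanCLM (𝕜 := ℂ) (n := n) M‖

/-- A density matrix: positive semidefinite with unit trace. -/
def IsDensityMatrix {n : Type*} [Fintype n] [DecidableEq n] (ρ : Matrix n n ℂ) : Prop :=
  ρ.PosSemidef ∧ ρ.trace = 1

/-- Orthonormality of a family of `d` vectors in `ℂ^d` (for each measurement setting). -/
def IsONBFamily {N d : ℕ} (φ : Fin N → Fin d → (Fin d → ℂ)) : Prop :=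
  ∀ x a b, (∑ i, (starRingEnd ℂ) (φ x a i) * φ x b i) = if a = b then 1 else 0

/-- `s_k` : the maximal operator norm of a sum of `k` distinct projectors
`|φ_x^a⟩⟨φ_x^a|` drawn from the measurement eigenvectors `φ`. -/
def sMax {N d : ℕ} (φ : Fin N → Fin d → (Fin d → ℂ)) (k : ℕ) : ℝ :=
  sSup { r : ℝ | ∃ T : Finset (Fin N × Fin d), T.card = k ∧
    r = opNorm (∑ q ∈ T, rankOneProj (φ q.1 q.2)) }

open scoped MatrixOrder Matrix.Norms.L2Operator in
lemma re_trace_mul_le {n : Type*} [Fintype n] [DecidableEq n] (M ρ : Matrix n n ℂ)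
    (hρ : IsDensityMatrix ρ) : (Matrix.trace (M * ρ)).re ≤ opNorm M := by
  obtain ⟨hp, ht⟩ := hρ
  obtain ⟨B, rfl⟩ : ∃ B : Matrix n n ℂ, ρ = B * B.conjTranspose := by
    obtain ⟨B, hB⟩ := CStarAlgebra.nonneg_iff_eq_star_mul_self.mp hp.nonneg
    exact ⟨B.conjTranspose, by simpa [Matrix.star_eq_conjTranspose] using hB⟩
  -- With `b j` the columns of `B`, `Tr (M B Bᴴ) = ∑ ⟪b j, M b j⟫` and `∑ ‖b j‖² = Tr (B Bᴴ) = 1`.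
  let b : n → EuclideanSpace ℂ n := fun j => WithLp.toLp 2 (fun i => B i j)
  have h1 : Matrix.trace (M * (B * B.conjTranspose)) =
      ∑ j, inner ℂ (b j) (Matrix.toEuclideanCLM (𝕜 := ℂ) (n := n) M (b j)) := by
    rw [← Matrix.mul_assoc, Matrix.trace_mul_comm]
    simp only [Matrix.trace, Matrix.diag_apply]
    refine Finset.sum_congr rfl fun j _ => ?_
    rw [Matrix.mul_apply, PiLp.inner_apply]
    refine Finset.sum_congr rfl fun i _ => ?_
    simp [b, Matrix.mul_apply, Matrix.mulVec, dotProduct, Matrix.toEuclideanCLM_toLp, mul_comm]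
  have h2 : ∑ j, ‖b j‖ ^ 2 = 1 := by
    have : ((∑ j, ‖b j‖ ^ 2 : ℝ) : ℂ) = 1 := by
      rw [← ht, Matrix.trace]
      simp only [Matrix.diag_apply, Matrix.mul_apply, EuclideanSpace.norm_sq_eq,
        Matrix.conjTranspose_apply, b]
      push_cast
      rw [Finset.sum_comm]
      refine Finset.sum_congr rfl fun i _ => Finset.sum_congr rfl fun j _ => ?_
      simp [Complex.mul_conj']
    exact_mod_cast this
  rw [h1, Complex.re_sum]
  calc ∑ j, (inner ℂ (b j) (Matrix.toEuclideanCLM (𝕜 := ℂ) (n := n) M (b j))).re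
      ≤ ∑ j, opNorm M * ‖b j‖ ^ 2 := by
        refine Finset.sum_le_sum fun j _ => ?_
        refine (Complex.re_le_norm _).trans ((norm_inner_le_norm _ _).trans ?_)
        have := (Matrix.toEuclideanCLM (𝕜 := ℂ) (n := n) M).le_opNorm (b j)
        have h := mul_le_mul_of_nonneg_left this (norm_nonneg (b j))
        unfold opNorm
        linarith
    _ = opNorm M := by rw [← Finset.mul_sum, h2, mul_one]

lemma re_trace_rankOneProj_nonneg {n : Type*} [Fintype n] [DecidableEq n] (v : n → ℂ)
    (ρ : Matrix n n ℂ) (hρ : IsDensityMatrix ρ) :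
    0 ≤ (Matrix.trace (rankOneProj v * ρ)).re := by
  have h := (Complex.nonneg_iff.mp (hρ.1.dotProduct_mulVec_nonneg v)).1
  rwa [rankOneProj, Matrix.trace_mul_comm, Matrix.mul_vecMulVec, Matrix.trace_vecMulVec,
    dotProduct_comm]

/-- Entrywise conjugation is an antilinear isometry, so it preserves the operator norm. -/
lemma opNorm_conj_le {n : Type*} [Fintype n] [DecidableEq n] (M : Matrix n n ℂ) :
    opNorm (M.map (starRingEnd ℂ)) ≤ opNorm M := by
  refine ContinuousLinearMap.opNorm_le_bound _ (norm_nonneg _) fun x => ?_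
  let y : EuclideanSpace ℂ n := WithLp.toLp 2 (fun i => (starRingEnd ℂ) (x i))
  have hy : ‖y‖ = ‖x‖ := by simp [EuclideanSpace.norm_eq, y]
  have hM : ‖Matrix.toEuclideanCLM (𝕜 := ℂ) (n := n) (M.map (starRingEnd ℂ)) x‖ =
      ‖Matrix.toEuclideanCLM (𝕜 := ℂ) (n := n) M y‖ := by
    rw [EuclideanSpace.norm_eq, EuclideanSpace.norm_eq]
    congr 1
    refine Finset.sum_congr rfl fun i _ => ?_
    congr 1
    rw [← RCLike.norm_conj]
    congr 1
    simp [Matrix.mulVec, dotProduct, y, Matrix.ofLp_toEuclideanCLM]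
  rw [hM, ← hy]
  exact ContinuousLinearMap.le_opNorm _ _

lemma opNorm_conj {n : Type*} [Fintype n] [DecidableEq n] (M : Matrix n n ℂ) :
    opNorm (M.map (starRingEnd ℂ)) = opNorm M := by
  refine le_antisymm (opNorm_conj_le M) ?_
  have h := opNorm_conj_le (M.map (starRingEnd ℂ))
  have e : (M.map (starRingEnd ℂ)).map (starRingEnd ℂ) = M := by ext; simp
  rwa [e] at h

lemma sMax_conj {N d : ℕ} (φ ψ : Fin N → Fin d → (Fin d → ℂ))
    (hψ : ∀ x a i, ψ x a i = (starRingEnd ℂ) (φ x a i)) (k : ℕ) : sMax ψ k = sMax φ k := by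
  have h : ∀ T : Finset (Fin N × Fin d), opNorm (∑ q ∈ T, rankOneProj (ψ q.1 q.2)) =
      opNorm (∑ q ∈ T, rankOneProj (φ q.1 q.2)) := fun T => by
    rw [← opNorm_conj (∑ q ∈ T, rankOneProj (φ q.1 q.2))]
    congr 1
    ext i j
    simp [Matrix.sum_apply, rankOneProj, Matrix.vecMulVec_apply, hψ]
  simp only [sMax, h]

lemma le_sMax {N d : ℕ} (φ : Fin N → Fin d → (Fin d → ℂ)) (T : Finset (Fin N × Fin d)) :
    opNorm (∑ q ∈ T, rankOneProj (φ q.1 q.2)) ≤ sMax φ T.card := by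
  refine le_csSup ?_ ⟨T, rfl, rfl⟩
  refine ((Set.finite_range fun T : Finset (Fin N × Fin d) =>
    opNorm (∑ q ∈ T, rankOneProj (φ q.1 q.2))).subset ?_).bddAbove
  rintro r ⟨T, -, rfl⟩
  exact ⟨T, rfl⟩

lemma sMax_zero {N d : ℕ} (φ : Fin N → Fin d → (Fin d → ℂ)) : sMax φ 0 = 0 := by
  simp [sMax, opNorm]

/-- If `f` is decreasing with `f n ≥ 0`, and its partial sums up to length `n` are dominated by `s`,
with `s 0 = 0`, then `∑ f² ≤ ∑ (s (i+1) - s i)²` over `i < n`. The increments of `s` need not be monotone. -/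
lemma sum_sq_le_of_partialSum_le (n : ℕ) (f s : ℕ → ℝ) (hf : Antitone f) (hn : 0 ≤ f n)
    (hs : s 0 = 0) (h : ∀ k ≤ n, ∑ i ∈ Finset.range k, f i ≤ s k) :
    ∑ i ∈ Finset.range n, f i ^ 2 ≤ ∑ i ∈ Finset.range n, (s (i + 1) - s i) ^ 2 := by
  -- Abel summation for the slack `s m - ∑_{i<m} f i`, in inductive form.
  have key : ∀ m ≤ n, (s m - ∑ i ∈ Finset.range m, f i) * f m ≤
      ∑ i ∈ Finset.range m, (s (i + 1) - s i - f i) * f i := by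
    intro m
    induction m with
    | zero => simp [hs]
    | succ m ih =>
      intro hm
      have h1 := ih (by omega)
      have h2 := h (m + 1) hm
      have h3 := hf (Nat.le_succ m)
      rw [Finset.sum_range_succ] at h2
      rw [Finset.sum_range_succ, Finset.sum_range_succ]
      have h4 := mul_le_mul_of_nonneg_left h3 (sub_nonneg.mpr h2)
      simp only [Nat.succ_eq_add_one] at h4
      linarith
  have h0 := (mul_nonneg (sub_nonneg.mpr (h n le_rfl)) hn).trans (key n le_rfl)
  have h1 : ∑ i ∈ Finset.range n, (s (i + 1) - s i - f i) * f i ≤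
      ∑ i ∈ Finset.range n, ((s (i + 1) - s i) ^ 2 - f i ^ 2) / 2 :=
    Finset.sum_le_sum fun i _ => by nlinarith [sq_nonneg (s (i + 1) - s i - f i)]
  rw [← Finset.sum_div, Finset.sum_sub_distrib] at h1
  linarith

/-- The same bound for an unordered nonnegative family, all of whose `k`-element subsums are at
most `s k`. -/
lemma sum_sq_le_of_subsum_le {Q : Type*} [Fintype Q] (n : ℕ) (hc : Fintype.card Q = n)
    (α : Q → ℝ) (hα : ∀ q, 0 ≤ α q) (s : ℕ → ℝ) (hs : s 0 = 0)
    (h : ∀ T : Finset Q, ∑ q ∈ T, α q ≤ s T.card) :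
    ∑ q, α q ^ 2 ≤ ∑ i ∈ Finset.range n, (s (i + 1) - s i) ^ 2 := by
  let e₀ : Fin n ≃ Q := (Fintype.equivFinOfCardEq hc).symm
  let e : Fin n ≃ Q := (Tuple.sort fun i => -α (e₀ i)).trans e₀
  have he : ∀ i j : Fin n, i ≤ j → α (e j) ≤ α (e i) := fun i j hij => by
    have := Tuple.monotone_sort (fun i => -α (e₀ i)) hij
    simpa [e] using this
  -- The decreasing rearrangement of `α`, extended by zero.
  let f : ℕ → ℝ := fun i => if hi : i < n then α (e ⟨i, hi⟩) else 0
  have hf : Antitone f := fun i j hij => by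
    by_cases hj : j < n
    · have hi : i < n := by omega
      simpa [f, hi, hj] using he ⟨i, hi⟩ ⟨j, hj⟩ hij
    · by_cases hi : i < n
      · simpa [f, hi, hj] using hα _
      · simp [f, hi, hj]
  have h1 : ∑ q, α q ^ 2 = ∑ i ∈ Finset.range n, f i ^ 2 := by
    rw [← Fin.sum_univ_eq_sum_range (fun i => f i ^ 2), ← Equiv.sum_comp e]
    simp [f]
  rw [h1]
  refine sum_sq_le_of_partialSum_le n f s hf (by simp [f]) hs fun k hk => ?_
  let g : Fin k ↪ Q := (Fin.castLEEmb hk).trans e.toEmbedding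
  have h2 := h (Finset.univ.map g)
  rw [Finset.sum_map, Finset.card_map, Finset.card_univ, Fintype.card_fin] at h2
  rw [← Fin.sum_univ_eq_sum_range]
  refine le_trans (le_of_eq ?_) h2
  refine Finset.sum_congr rfl fun i _ => ?_
  have hi : (i : ℕ) < n := by omega
  simp only [f, hi, dif_pos]
  rfl

lemma sum_sq_prob_le {N d : ℕ} (φ : Fin N → Fin d → (Fin d → ℂ)) (ρ : Matrix (Fin d) (Fin d) ℂ)
    (hρ : IsDensityMatrix ρ) :
    ∑ x, ∑ a, (Matrix.trace (rankOneProj (φ x a) * ρ)).re ^ 2 ≤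
      ∑ i ∈ Finset.range (d * N), (sMax φ (i + 1) - sMax φ i) ^ 2 := by
  have h := sum_sq_le_of_subsum_le (Q := Fin N × Fin d) (d * N) (by simp [mul_comm])
    (fun q => (Matrix.trace (rankOneProj (φ q.1 q.2) * ρ)).re)
    (fun q => re_trace_rankOneProj_nonneg _ _ hρ) (sMax φ) (sMax_zero φ) fun T => by
      refine le_trans (le_of_eq ?_) ((re_trace_mul_le _ ρ hρ).trans (le_sMax φ T))
      rw [Finset.sum_mul, Matrix.trace_sum, Complex.re_sum]
  rwa [Fintype.sum_prod_type] at h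

/-- The maximally entangled state `d⁻¹ ∑_{i,j} |ii⟩⟨jj|`. -/
def maxEntangled (d : ℕ) : Matrix (Fin d × Fin d) (Fin d × Fin d) ℂ :=
  (d : ℂ)⁻¹ • rankOneProj fun q : Fin d × Fin d => if q.1 = q.2 then 1 else 0

lemma maxEntangled_isDensityMatrix {d : ℕ} (hd : 1 ≤ d) : IsDensityMatrix (maxEntangled d) := by
  constructor
  · refine Matrix.PosSemidef.smul (Matrix.posSemidef_vecMulVec_self_star _) ?_
    exact inv_nonneg.mpr (Nat.cast_nonneg d)
  · have : (d : ℂ) ≠ 0 := by exact_mod_cast (by omega : d ≠ 0)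
    simp [maxEntangled, rankOneProj, Matrix.trace_smul, Matrix.trace_vecMulVec, dotProduct,
      Fintype.sum_prod_type, this]

/-- `Tr ((P̄ ⊗ P) ρ) = d⁻¹ ∑_{i,j} |P i j|² = d⁻¹` for the maximally entangled `ρ` and the
projection `P` onto a unit vector. -/
lemma maxEntangled_value {d : ℕ} (v w : Fin d → ℂ) (hw : ∀ i, w i = (starRingEnd ℂ) (v i))
    (hv : ∑ i, (starRingEnd ℂ) (v i) * v i = 1) :
    Matrix.trace (Matrix.kroneckerMap (· * ·) (rankOneProj w) (rankOneProj v) * maxEntangled d) =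
      (d : ℂ)⁻¹ := by
  have h : Matrix.trace (Matrix.kroneckerMap (· * ·) (rankOneProj w) (rankOneProj v) *
      maxEntangled d) = (d : ℂ)⁻¹ *
        ((∑ i, (starRingEnd ℂ) (v i) * v i) * ∑ i, (starRingEnd ℂ) (v i) * v i) := by
    rw [maxEntangled, Matrix.mul_smul, Matrix.trace_smul, smul_eq_mul]
    congr 1
    simp only [rankOneProj, Matrix.trace, Matrix.diag_apply, Matrix.mul_apply,
      Matrix.kroneckerMap_apply, Matrix.vecMulVec_apply, Fintype.sum_prod_type, Pi.star_apply, hw,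
      apply_ite star, star_one, star_zero, mul_ite, mul_one, mul_zero,
      Finset.sum_ite_eq, Finset.mem_univ, if_true, Finset.sum_ite_irrel, Finset.sum_const_zero]
    rw [Finset.sum_mul_sum]
    refine Finset.sum_congr rfl fun i _ => Finset.sum_congr rfl fun j _ => ?_
    simp
    ring
  rw [h, hv]
  simp

/-- **Corollary (violation of the entanglement inequality).**
With Alice's bases the entrywise conjugates of Bob's, the maximal quantum value exceeds
the maximal separable value by a factor of at least `N / S^{AB}`. -/
theorem entanglement_violation
    (N d : ℕ) (hN : 1 ≤ N) (hd : 1 ≤ d)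
    (φ : Fin N → Fin d → (Fin d → ℂ)) (hφ : IsONBFamily φ)
    (ψ : Fin N → Fin d → (Fin d → ℂ))
    (hψ : ∀ x a i, ψ x a i = (starRingEnd ℂ) (φ x a i))
    (SAB : ℝ)
    (hSAB : SAB = ∑ k ∈ Finset.Icc 1 (d * N),
      (sMax ψ k - sMax ψ (k - 1)) * (sMax φ k - sMax φ (k - 1)))
    (ZQ ZS : Set ℝ)
    (hZQ : ZQ = { r : ℝ |
      ∃ ρ : Matrix (Fin d × Fin d) (Fin d × Fin d) ℂ, IsDensityMatrix ρ ∧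
        r = ∑ x, ∑ a, (Matrix.trace
          (Matrix.kroneckerMap (· * ·) (rankOneProj (ψ x a)) (rankOneProj (φ x a)) * ρ)).re })
    (hZS : ZS = { r : ℝ | ∃ (Λ : Type) (_ : Fintype Λ) (p : Λ → ℝ)
        (ρA ρB : Λ → Matrix (Fin d) (Fin d) ℂ),
      (∀ l, 0 ≤ p l) ∧ (∑ l, p l = 1) ∧
      (∀ l, IsDensityMatrix (ρA l)) ∧ (∀ l, IsDensityMatrix (ρB l)) ∧
      r = ∑ x, ∑ a, ∑ l, p l *
        (Matrix.trace (rankOneProj (ψ x a) * ρA l)).re *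
        (Matrix.trace (rankOneProj (φ x a) * ρB l)).re }) :
    ((N : ℝ) / SAB) * sSup ZS ≤ sSup ZQ := by
  have hSAB' : SAB = ∑ i ∈ Finset.range (d * N), (sMax φ (i + 1) - sMax φ i) ^ 2 := by
    have h := Finset.sum_Ico_add' (fun k => (sMax φ k - sMax φ (k - 1)) ^ 2) 0 (d * N) 1
    simp only [Nat.add_sub_cancel] at h
    rw [hSAB, Finset.range_eq_Ico, h]
    refine Finset.sum_congr ?_ fun k _ => ?_
    · ext k
      simp only [Finset.mem_Icc, Finset.mem_Ico]
      omega
    · rw [sMax_conj φ ψ hψ, sMax_conj φ ψ hψ, sq]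
  have hSAB0 : 0 ≤ SAB := hSAB' ▸ Finset.sum_nonneg fun i _ => sq_nonneg _
  have hψs : ∀ k, sMax ψ k = sMax φ k := sMax_conj φ ψ hψ
  have hS : sSup ZS ≤ SAB := by
    refine Real.sSup_le ?_ hSAB0
    rw [hZS]
    rintro r ⟨Λ, _, p, ρA, ρB, hp, hp1, hA, hB, rfl⟩
    have hl : ∀ l, ∑ x, ∑ a, (Matrix.trace (rankOneProj (ψ x a) * ρA l)).re *
        (Matrix.trace (rankOneProj (φ x a) * ρB l)).re ≤ SAB := fun l => by
      have h1 := sum_sq_prob_le ψ (ρA l) (hA l)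
      have h2 := sum_sq_prob_le φ (ρB l) (hB l)
      simp only [hψs] at h1
      rw [← hSAB'] at h1 h2
      have h3 : ∑ x, ∑ a, (Matrix.trace (rankOneProj (ψ x a) * ρA l)).re *
          (Matrix.trace (rankOneProj (φ x a) * ρB l)).re ≤
          ∑ x, ∑ a, ((Matrix.trace (rankOneProj (ψ x a) * ρA l)).re ^ 2 / 2 +
            (Matrix.trace (rankOneProj (φ x a) * ρB l)).re ^ 2 / 2) :=
        Finset.sum_le_sum fun x _ => Finset.sum_le_sum fun a _ => by
          nlinarith [sq_nonneg ((Matrix.trace (rankOneProj (ψ x a) * ρA l)).re -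
            (Matrix.trace (rankOneProj (φ x a) * ρB l)).re)]
      simp only [Finset.sum_add_distrib, ← Finset.sum_div] at h3
      linarith
    calc ∑ x, ∑ a, ∑ l, p l * (Matrix.trace (rankOneProj (ψ x a) * ρA l)).re *
          (Matrix.trace (rankOneProj (φ x a) * ρB l)).re
        = ∑ l, p l * ∑ x, ∑ a, (Matrix.trace (rankOneProj (ψ x a) * ρA l)).re *
          (Matrix.trace (rankOneProj (φ x a) * ρB l)).re := by
          simp only [Finset.mul_sum, ← mul_assoc]
          conv_rhs => rw [Finset.sum_comm]
          exact Finset.sum_congr rfl fun x _ => Finset.sum_comm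
      _ ≤ ∑ l, p l * SAB :=
          Finset.sum_le_sum fun l _ => mul_le_mul_of_nonneg_left (hl l) (hp l)
      _ = SAB := by rw [← Finset.sum_mul, hp1, one_mul]
  have hQ : (N : ℝ) ≤ sSup ZQ := by
    rw [hZQ]
    refine le_csSup ⟨∑ x, ∑ a, opNorm (Matrix.kroneckerMap (· * ·) (rankOneProj (ψ x a))
      (rankOneProj (φ x a))), ?_⟩ ⟨maxEntangled d, maxEntangled_isDensityMatrix hd, ?_⟩
    · rintro r ⟨ρ, hρ, rfl⟩
      exact Finset.sum_le_sum fun x _ => Finset.sum_le_sum fun a _ => re_trace_mul_le _ ρ hρ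
    · have hv : ∀ x a, (Matrix.trace (Matrix.kroneckerMap (· * ·) (rankOneProj (ψ x a))
          (rankOneProj (φ x a)) * maxEntangled d)).re = (d : ℝ)⁻¹ := fun x a => by
        rw [maxEntangled_value (φ x a) (ψ x a) (hψ x a) (by simpa using hφ x a a)]
        rw [← Complex.ofReal_natCast, ← Complex.ofReal_inv, Complex.ofReal_re]
      have : (d : ℝ) ≠ 0 := by exact_mod_cast (by omega : d ≠ 0)
      simp [hv, this]
  -- For `SAB = 0` the quotient `N / SAB` is `0`, and `sSup ZQ ≥ N ≥ 0`.
  rcases hSAB0.eq_or_lt with h0 | hpos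
  · rw [← h0, div_zero, zero_mul]
    exact (Nat.cast_nonneg N).trans hQ
  · calc (N : ℝ) / SAB * sSup ZS ≤ N / SAB * SAB :=
          mul_le_mul_of_nonneg_left hS (div_nonneg (Nat.cast_nonneg N) hSAB0)
      _ = N := div_mul_cancel₀ _ hpos.ne'
      _ ≤ sSup ZQ := hQ
end
end

section
/- Let {Π_x^a : a = 1,…,m}, x = 1,…,N, be POVMs on ℂ^n and let ρ be a density matrix on ℂ^n. Then the vector P := (Tr(Π_x^a ρ))_{(x,a)} ∈ ℝ^{Nm} satisfies: for every k = 1,…,Nm, the sum of the k largest entries of P is at most s_k, where s_k := max over subsets T ⊆ {1,…,N}×{1,…,m} with |T| = k of the operator norm of Σ_{(x,a)∈T} Π_x^a; moreover Σ_{(x,a)} Tr(Π_x^a ρ) = N = s_{Nm}. Equivalently, P is majorized by the vector W := (s_1, s_2 − s_1, …, s_{Nm} − s_{Nm−1}) whenever the increments s_k − s_{k−1} are nonincreasing. -/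
/-!
The bound is the duality `Re Tr(A ρ) ≤ ‖A‖` for a density matrix `ρ` (`re_trace_mul_le_opNorm`):
writing `ρ = Bᴴ B`, the trace is `∑ i, ⟪v i, A (v i)⟫` over the columns `v i` of `Bᴴ`, and
`∑ i, ‖v i‖² = Tr ρ = 1`. The `k` largest entries of `P` are indexed by some `T` of size `k`, and
their sum is `Re Tr((∑ q ∈ T, Π_q) ρ)`, which is therefore at most `s k`. For `k = N m` the only
`T` is everything and the operator is `N • 1`. If the increments of `s` are nonincreasing, then `W`
is its own decreasing rearrangement (`dSort_eq_self`), and `topSum W k` telescopes to `s k`.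
-/

open scoped ComplexOrder

noncomputable section

/-- The decreasing rearrangement of a real vector. -/
def dSort {n : ℕ} (v : Fin n → ℝ) : Fin n → ℝ := fun i => v (Tuple.sort v i.rev)

/-- The sum of the `k` largest entries of a real vector. -/
def topSum {n : ℕ} (v : Fin n → ℝ) (k : ℕ) : ℝ :=
  ∑ i ∈ Finset.univ.filter (fun i : Fin n => (i : ℕ) < k), dSort v i

/-- Trace duality, for an arbitrary matrix `A` against a density matrix. -/
lemma re_trace_mul_le_opNorm {n : ℕ} (A ρ : Matrix (Fin n) (Fin n) ℂ) (hρ : IsDensityMatrix ρ) :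
    (Matrix.trace (A * ρ)).re ≤ opNorm A := by
  obtain ⟨hpos, htr⟩ := hρ
  obtain ⟨B, rfl⟩ : ∃ B : Matrix (Fin n) (Fin n) ℂ, ρ = B.conjTranspose * B := by
    open scoped MatrixOrder in
    exact CStarAlgebra.nonneg_iff_eq_star_mul_self.mp hpos.nonneg
  let v : Fin n → EuclideanSpace ℂ (Fin n) := fun i => WithLp.toLp 2 (fun j => star (B i j))
  have h1 : Matrix.trace (A * (B.conjTranspose * B)) =
      ∑ i, inner ℂ (v i) (Matrix.toEuclideanCLM (𝕜 := ℂ) (n := Fin n) A (v i)) := by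
    rw [← Matrix.mul_assoc, Matrix.trace_mul_comm]
    simp only [Matrix.trace, Matrix.diag_apply]
    refine Finset.sum_congr rfl fun i _ => ?_
    simp only [v, Matrix.mul_apply, PiLp.inner_apply, Matrix.toEuclideanCLM_toLp,
      Matrix.mulVec, dotProduct, Matrix.conjTranspose_apply, RCLike.inner_apply]
    refine Finset.sum_congr rfl fun j _ => ?_
    simp [mul_comm]
  have h2 : ∑ i, ‖v i‖ ^ 2 = 1 := by
    have h3 : ((∑ i, ‖v i‖ ^ 2 : ℝ) : ℂ) = 1 := by
      rw [← htr, Matrix.trace_mul_comm]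
      simp only [Matrix.trace, Matrix.diag_apply, Matrix.mul_apply, v, EuclideanSpace.norm_sq_eq,
        Matrix.conjTranspose_apply, norm_star]
      push_cast
      refine Finset.sum_congr rfl fun i _ => Finset.sum_congr rfl fun j _ => ?_
      exact (Complex.mul_conj' _).symm
    exact_mod_cast h3
  rw [h1, Complex.re_sum]
  calc _ ≤ ∑ i, opNorm A * ‖v i‖ ^ 2 := Finset.sum_le_sum fun i _ => by
        calc _ ≤ ‖inner ℂ (v i) (Matrix.toEuclideanCLM (𝕜 := ℂ) (n := Fin n) A (v i))‖ :=
              Complex.re_le_norm _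
          _ ≤ ‖v i‖ * ‖Matrix.toEuclideanCLM (𝕜 := ℂ) (n := Fin n) A (v i)‖ :=
              norm_inner_le_norm _ _
          _ ≤ ‖v i‖ * (opNorm A * ‖v i‖) := by
              gcongr
              exact ContinuousLinearMap.le_opNorm _ _
          _ = _ := by ring
    _ = opNorm A := by rw [← Finset.mul_sum, h2, mul_one]

lemma dSort_eq_self {d : ℕ} (v : Fin d → ℝ) (hv : Antitone v) : dSort v = v := by
  have hmono : Monotone (v ∘ (Fin.revPerm : Equiv.Perm (Fin d))) := fun i j hij =>
    hv (Fin.rev_le_rev.mpr hij)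
  have h := Tuple.comp_sort_eq_comp_iff_monotone.mpr hmono
  funext i
  simpa [dSort] using (congrFun h i.rev).symm

lemma sum_filter_val_lt {d k : ℕ} (hk : k ≤ d) (f : ℕ → ℝ) :
    ∑ i ∈ Finset.univ.filter (fun i : Fin d => (i : ℕ) < k), f i = ∑ i ∈ Finset.range k, f i := by
  refine Finset.sum_bij (fun i _ => (i : ℕ)) (by simp) (fun _ _ _ _ h => Fin.ext h) ?_
    (fun _ _ => rfl)
  intro b hb
  have hb' := Finset.mem_range.mp hb
  exact ⟨⟨b, by omega⟩, by simpa using hb', rfl⟩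

/-- **Direct-sum majorization bound for POVM outcome probabilities (state-independent).**
The probability vector `P = (Tr(Π_x^a ρ))_{(x,a)}` has its `k` largest entries summing to at
most `s_k`, the total sum is `N = s_{Nm}`, and (equivalently) whenever the increments of `s`
are nonincreasing, `P` is majorized by `W = (s_1, s_2 − s_1, …)`. -/
theorem povm_prob_vector_submajorized
    (n N m : ℕ) (hn : 1 ≤ n) (hN : 1 ≤ N) (hm : 1 ≤ m)
    (Pv : Fin N → Fin m → Matrix (Fin n) (Fin n) ℂ)
    (hPvpos : ∀ x a, (Pv x a).PosSemidef)
    (hPvsum : ∀ x, ∑ a, Pv x a = (1 : Matrix (Fin n) (Fin n) ℂ))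
    (ρ : Matrix (Fin n) (Fin n) ℂ) (hρ : IsDensityMatrix ρ)
    (P : Fin (N * m) → ℝ)
    (hP : P = fun i =>
      (Matrix.trace (Pv (finProdFinEquiv.symm i).1 (finProdFinEquiv.symm i).2 * ρ)).re)
    (s : ℕ → ℝ)
    (hs : ∀ k, s k = sSup { r : ℝ | ∃ T : Finset (Fin N × Fin m), T.card = k ∧
      r = opNorm (∑ q ∈ T, Pv q.1 q.2) })
    (W : Fin (N * m) → ℝ) (hW : W = fun i : Fin (N * m) => s ((i : ℕ) + 1) - s (i : ℕ)) :
    (∀ k, 1 ≤ k → k ≤ N * m → topSum P k ≤ s k) ∧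
    (∑ i, P i = N) ∧ s (N * m) = N ∧
    ((∀ k, 1 ≤ k → k < N * m → s (k + 1) - s k ≤ s k - s (k - 1)) →
      (∀ k, 1 ≤ k → k ≤ N * m → topSum P k ≤ topSum W k) ∧ ∑ i, P i = ∑ i, W i) := by
  have hmem : ∀ T : Finset (Fin N × Fin m), opNorm (∑ q ∈ T, Pv q.1 q.2) ≤ s T.card := by
    intro T
    rw [hs]
    refine le_csSup (Set.Finite.bddAbove ?_) ⟨T, rfl, rfl⟩
    refine (Set.finite_range fun T : Finset (Fin N × Fin m) =>
      opNorm (∑ q ∈ T, Pv q.1 q.2)).subset ?_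
    rintro r ⟨T, -, rfl⟩
    exact ⟨T, rfl⟩
  have htop : ∀ k, 1 ≤ k → k ≤ N * m → topSum P k ≤ s k := by
    intro k _ hk
    let e : Fin (N * m) ↪ Fin N × Fin m :=
      ⟨fun i => finProdFinEquiv.symm (Tuple.sort P i.rev), fun i j h => by
        exact Fin.rev_injective ((Tuple.sort P).injective (finProdFinEquiv.symm.injective h))⟩
    let T := (Finset.univ.filter (fun i : Fin (N * m) => (i : ℕ) < k)).map e
    have hcard : T.card = k := by
      rw [Finset.card_map]
      have := sum_filter_val_lt hk (fun _ => 1)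
      simp only [Finset.sum_const, Finset.card_range, nsmul_eq_mul, mul_one] at this
      exact_mod_cast this
    have hsum : topSum P k = (Matrix.trace ((∑ q ∈ T, Pv q.1 q.2) * ρ)).re := by
      rw [Finset.sum_mul, Matrix.trace_sum, Complex.re_sum, Finset.sum_map]
      unfold topSum dSort
      refine Finset.sum_congr rfl fun i _ => ?_
      exact congrFun hP _
    calc topSum P k ≤ opNorm (∑ q ∈ T, Pv q.1 q.2) := hsum ▸ re_trace_mul_le_opNorm _ _ hρ
      _ ≤ s T.card := hmem T
      _ = s k := by rw [hcard]
  have hall : ∑ q : Fin N × Fin m, Pv q.1 q.2 = (N : ℂ) • (1 : Matrix (Fin n) (Fin n) ℂ) := by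
    rw [Fintype.sum_prod_type]
    simp [hPvsum, Nat.cast_smul_eq_nsmul]
  have hPsum : ∑ i, P i = N := by
    have h : ∑ i, P i = ∑ q : Fin N × Fin m, (Matrix.trace (Pv q.1 q.2 * ρ)).re := by
      rw [hP]
      exact Equiv.sum_comp finProdFinEquiv.symm
        (fun q : Fin N × Fin m => (Matrix.trace (Pv q.1 q.2 * ρ)).re)
    rw [h, ← Complex.re_sum, ← Matrix.trace_sum, ← Finset.sum_mul, hall]
    simp [hρ.2]
  have hsN : s (N * m) = N := by
    have hset : { r : ℝ | ∃ T : Finset (Fin N × Fin m), T.card = N * m ∧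
        r = opNorm (∑ q ∈ T, Pv q.1 q.2) } = {(N : ℝ)} := by
      have hnorm : opNorm (∑ q : Fin N × Fin m, Pv q.1 q.2) = N := by
        have : NeZero n := ⟨by omega⟩
        rw [hall, opNorm, map_smul, map_one, norm_smul, norm_one]
        simp
      ext r
      simp only [Set.mem_ofPred_eq, Set.mem_singleton_iff]
      constructor
      · rintro ⟨T, hT, rfl⟩
        have : T = Finset.univ := by
          rw [← Finset.card_eq_iff_eq_univ, hT]
          simp
        rw [this, hnorm]
      · rintro rfl
        exact ⟨Finset.univ, by simp, hnorm.symm⟩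
    rw [hs, hset, csSup_singleton]
  have hs0 : s 0 = 0 := by
    rw [hs]
    simp [opNorm]
  refine ⟨htop, hPsum, hsN, fun hinc => ⟨fun k hk1 hk => ?_, ?_⟩⟩
  · have hanti : Antitone W := by
      have key : ∀ j : ℕ, ∀ i ≤ j, j < N * m → s (j + 1) - s j ≤ s (i + 1) - s i := by
        intro j i hij
        induction j, hij using Nat.le_induction with
        | base => intro _; exact le_rfl
        | succ j _ ih =>
          intro hj
          have h := hinc (j + 1) (by omega) hj
          rw [Nat.add_sub_cancel] at h
          exact h.trans (ih (by omega))
      intro i j hij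
      rw [hW]
      exact key j i hij j.2
    refine (htop k hk1 hk).trans_eq ?_
    rw [topSum, dSort_eq_self W hanti, hW, sum_filter_val_lt hk (fun i => s (i + 1) - s i),
      Finset.sum_range_sub, hs0, sub_zero]
  · rw [hPsum, hW, Fin.sum_univ_eq_sum_range (fun i => s (i + 1) - s i), Finset.sum_range_sub,
      hs0, sub_zero, hsN]
end
end

section
/- Let {Π_x^a : a = 1,…,m}, x = 1,…,N, be POVMs on ℂ^n and let ρ be a density matrix on ℂ^n with decreasingly ordered eigenvalue vector λ := eig↓(ρ). Then the vector P := (Tr(Π_x^a ρ))_{(x,a)} ∈ ℝ^{Nm} satisfies: for every k = 1,…,Nm, the sum of the k largest entries of P is at most s_k(λ) := max over subsets T ⊆ {1,…,N}×{1,…,m} with |T| = k of Σ_{i=1}^n λ_i · eig↓(Σ_{(x,a)∈T} Π_x^a)_i; moreover Σ_{(x,a)} Tr(Π_x^a ρ) = N = s_{Nm}(λ). -/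
/-!
The sum of the `k` largest entries of `P` is `Tr(M_T ρ)`, where `T` is the set of positions of
those entries and `M_T = ∑_{(x,a) ∈ T} Π_x^a`. By von Neumann's trace inequality
(`trace_mul_le_sum_eigDesc`) this is at most `∑ i, λ_i eig↓(M_T)_i`, one of the numbers whose
maximum is `s_k(λ)`. For `k = Nm` the only choice of `T` is the full index set, for which
`M_T = N • 1`, so both totals are `N` times the unit trace of `ρ`.

Von Neumann's inequality comes from diagonalizing `A` and `B`: if `W` is the unitary matrix relating
the two eigenbases, then `Tr(AB) = ∑ i j, a_i |W_ij|² b_j`. The matrix `|W_ij|²` is doubly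
stochastic, hence by Birkhoff's theorem a convex combination of permutation matrices, and for each
permutation the rearrangement inequality applies.
-/

open scoped ComplexOrder

noncomputable section

/-- `eig↓(M)`: eigenvalues of a Hermitian matrix listed in decreasing order
(junk value `0` if `M` is not Hermitian). -/
def eigDesc {n : ℕ} (M : Matrix (Fin n) (Fin n) ℂ) : Fin n → ℝ :=
  if h : M.IsHermitian then dSort h.eigenvalues else 0

/-- The permutation that lists the entries of `v` in decreasing order. -/
def descPerm {n : ℕ} (v : Fin n → ℝ) : Equiv.Perm (Fin n) := Fin.revPerm.trans (Tuple.sort v)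

lemma dSort_eq_comp {n : ℕ} (v : Fin n → ℝ) : dSort v = v ∘ descPerm v := rfl

lemma dSort_antitone {n : ℕ} (v : Fin n → ℝ) : Antitone (dSort v) := fun _ _ hij =>
  Tuple.monotone_sort v (Fin.rev_le_rev.mpr hij)

lemma sum_dSort {n : ℕ} (v : Fin n → ℝ) : ∑ i, dSort v i = ∑ i, v i :=
  Equiv.sum_comp (descPerm v) v

lemma exists_topSum_eq {n : ℕ} (v : Fin n → ℝ) {k : ℕ} (hk : k ≤ n) :
    ∃ S : Finset (Fin n), S.card = k ∧ topSum v k = ∑ i ∈ S, v i := by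
  refine ⟨(Finset.univ.filter fun i : Fin n => (i : ℕ) < k).map (descPerm v).toEmbedding, ?_, ?_⟩
  · rw [Finset.card_map, Fin.card_filter_val_lt]
    exact min_eq_right hk
  · rw [Finset.sum_map]
    rfl

lemma sum_mul_comp_perm_le_dSort {n : ℕ} (f g : Fin n → ℝ) (σ : Equiv.Perm (Fin n)) :
    ∑ i, f i * g (σ i) ≤ ∑ i, dSort f i * dSort g i := by
  have hmono : Monovary (dSort f) (dSort g) := (dSort_antitone f).monovary (dSort_antitone g)
  -- `σ` transported to the sorted positions of `f` and `g`
  have key := hmono.sum_mul_comp_perm_le_sum_mul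
    (σ := (descPerm f).trans (σ.trans (descPerm g).symm))
  refine le_of_eq_of_le ?_ key
  rw [← Equiv.sum_comp (descPerm f)]
  simp [dSort_eq_comp]

/-- Birkhoff's theorem extends the rearrangement inequality from permutations to doubly stochastic
matrices. -/
lemma sum_doublyStochastic_le_dSort {n : ℕ} (f g : Fin n → ℝ) {M : Matrix (Fin n) (Fin n) ℝ}
    (hM : M ∈ doublyStochastic ℝ (Fin n)) :
    ∑ i, ∑ j, f i * M i j * g j ≤ ∑ i, dSort f i * dSort g i := by
  obtain ⟨w, hw0, hw1, rfl⟩ := exists_eq_sum_perm_of_mem_doublyStochastic hM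
  have hexp : ∑ i, ∑ j, f i * (∑ σ, w σ • σ.permMatrix ℝ) i j * g j
      = ∑ σ, w σ * ∑ i, f i * g (σ i) := by
    simp only [Matrix.sum_apply, Matrix.smul_apply, smul_eq_mul, Finset.mul_sum, Finset.sum_mul]
    rw [Finset.sum_congr rfl fun i _ => Finset.sum_comm, Finset.sum_comm]
    refine Finset.sum_congr rfl fun σ _ => Finset.sum_congr rfl fun i _ => ?_
    simp only [Equiv.Perm.permMatrix, PEquiv.toMatrix_apply, Equiv.toPEquiv_apply,
      Option.mem_some_iff, mul_ite, ite_mul, mul_one, mul_zero, zero_mul, Finset.sum_ite_eq,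
      Finset.mem_univ, if_true]
    ring
  rw [hexp]
  calc ∑ σ, w σ * ∑ i, f i * g (σ i)
      ≤ ∑ σ, w σ * ∑ i, dSort f i * dSort g i := Finset.sum_le_sum fun σ _ =>
        mul_le_mul_of_nonneg_left (sum_mul_comp_perm_le_dSort f g σ) (hw0 σ)
    _ = ∑ i, dSort f i * dSort g i := by rw [← Finset.sum_mul, hw1, one_mul]

lemma normSq_unitary_mem_doublyStochastic {n : ℕ} {W : Matrix (Fin n) (Fin n) ℂ}
    (hW : W ∈ Matrix.unitaryGroup (Fin n) ℂ) :
    Matrix.of (fun i j => Complex.normSq (W i j)) ∈ doublyStochastic ℝ (Fin n) := by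
  rw [mem_doublyStochastic_iff_sum]
  refine ⟨fun i j => Complex.normSq_nonneg _, fun i => ?_, fun j => ?_⟩
  · have h := congrFun (congrFun (Matrix.mem_unitaryGroup_iff.mp hW) i) i
    simp only [Matrix.mul_apply, Matrix.star_apply, Matrix.one_apply_eq, RCLike.star_def,
      Complex.mul_conj] at h
    exact_mod_cast h
  · have h := congrFun (congrFun (Matrix.mem_unitaryGroup_iff'.mp hW) j) j
    simp only [Matrix.mul_apply, Matrix.star_apply, Matrix.one_apply_eq, RCLike.star_def,
      mul_comm ((starRingEnd ℂ) _), Complex.mul_conj] at h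
    exact_mod_cast h

/-- Von Neumann's trace inequality for Hermitian matrices. -/
lemma trace_mul_le_sum_eigDesc {n : ℕ} {A B : Matrix (Fin n) (Fin n) ℂ}
    (hA : A.IsHermitian) (hB : B.IsHermitian) :
    (Matrix.trace (A * B)).re ≤ ∑ i, eigDesc A i * eigDesc B i := by
  rw [eigDesc, eigDesc, dif_pos hA, dif_pos hB]
  set U := hA.eigenvectorUnitary with hU
  set V := hB.eigenvectorUnitary with hV
  set W := star U * V with hWdef
  have htr : Matrix.trace (A * B) = Matrix.trace
      (Matrix.diagonal (fun i => (hA.eigenvalues i : ℂ)) * (W : Matrix (Fin n) (Fin n) ℂ) *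
        Matrix.diagonal (fun i => (hB.eigenvalues i : ℂ)) *
        star (W : Matrix (Fin n) (Fin n) ℂ)) := by
    have hA' : A = (U : Matrix (Fin n) (Fin n) ℂ) *
        Matrix.diagonal (fun i => (hA.eigenvalues i : ℂ)) *
        star (U : Matrix (Fin n) (Fin n) ℂ) := by
      conv_lhs => rw [hA.spectral_theorem, Unitary.conjStarAlgAut_apply]
      rfl
    have hB' : B = (V : Matrix (Fin n) (Fin n) ℂ) *
        Matrix.diagonal (fun i => (hB.eigenvalues i : ℂ)) *
        star (V : Matrix (Fin n) (Fin n) ℂ) := by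
      conv_lhs => rw [hB.spectral_theorem, Unitary.conjStarAlgAut_apply]
      rfl
    conv_lhs => rw [hA', hB']
    rw [mul_assoc, mul_assoc, Matrix.trace_mul_comm]
    simp [hWdef, mul_assoc]
  have hre : (Matrix.trace (A * B)).re = ∑ i, ∑ j, hA.eigenvalues i *
      Matrix.of (fun i j => Complex.normSq ((W : Matrix (Fin n) (Fin n) ℂ) i j)) i j *
      hB.eigenvalues j := by
    rw [htr, Matrix.trace, Complex.re_sum]
    refine Finset.sum_congr rfl fun i _ => ?_
    rw [Matrix.diag_apply, Matrix.mul_apply, Complex.re_sum]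
    refine Finset.sum_congr rfl fun j _ => ?_
    rw [Matrix.mul_diagonal, Matrix.diagonal_mul, Matrix.star_apply, RCLike.star_def,
      mul_right_comm, mul_assoc (hA.eigenvalues i : ℂ), Complex.mul_conj]
    simp
  rw [hre]
  exact sum_doublyStochastic_le_dSort _ _ (normSq_unitary_mem_doublyStochastic W.2)

lemma eigDesc_smul_one {n : ℕ} (c : ℝ) (i : Fin n) :
    eigDesc (c • (1 : Matrix (Fin n) (Fin n) ℂ)) i = c := by
  have hH : (c • (1 : Matrix (Fin n) (Fin n) ℂ)).IsHermitian := by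
    simp [Matrix.IsHermitian, Matrix.conjTranspose_smul]
  have : Nonempty (Fin n) := ⟨i⟩
  rw [eigDesc, dif_pos hH]
  have h := hH.eigenvalues_mem_spectrum_real (Tuple.sort hH.eigenvalues i.rev)
  have hspec : spectrum ℝ (c • (1 : Matrix (Fin n) (Fin n) ℂ)) = {c} := by
    rw [← Algebra.algebraMap_eq_smul_one, spectrum.scalar_eq]
  exact hspec.subset h

/-- **State-dependent direct-sum majorization bound for POVM outcome probabilities.**
The probability vector `P = (Tr(Π_x^a ρ))_{(x,a)}` has its `k` largest entries summing to at
most `s_k(λ)`, where `λ = eig↓(ρ)`; moreover the total sum is `N = s_{Nm}(λ)`. -/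
theorem povm_prob_vector_submajorized_state_dependent
    (n N m : ℕ) (hn : 1 ≤ n) (hN : 1 ≤ N) (hm : 1 ≤ m)
    (Pv : Fin N → Fin m → Matrix (Fin n) (Fin n) ℂ)
    (hPvpos : ∀ x a, (Pv x a).PosSemidef)
    (hPvsum : ∀ x, ∑ a, Pv x a = (1 : Matrix (Fin n) (Fin n) ℂ))
    (ρ : Matrix (Fin n) (Fin n) ℂ) (hρ : IsDensityMatrix ρ)
    (lam : Fin n → ℝ) (hlam : lam = eigDesc ρ)
    (P : Fin (N * m) → ℝ)
    (hP : P = fun i =>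
      (Matrix.trace (Pv (finProdFinEquiv.symm i).1 (finProdFinEquiv.symm i).2 * ρ)).re)
    (s : ℕ → ℝ)
    (hs : ∀ k, s k = sSup { r : ℝ | ∃ T : Finset (Fin N × Fin m), T.card = k ∧
      r = ∑ i, lam i * eigDesc (∑ q ∈ T, Pv q.1 q.2) i }) :
    (∀ k, 1 ≤ k → k ≤ N * m → topSum P k ≤ s k) ∧
    (∑ i, P i = N) ∧ s (N * m) = N := by
  have hρH := hρ.1.isHermitian
  have hTH : ∀ T : Finset (Fin N × Fin m), (∑ q ∈ T, Pv q.1 q.2).IsHermitian := fun T =>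
    (Matrix.posSemidef_sum T fun q _ => hPvpos q.1 q.2).isHermitian
  have hlamsum : ∑ i, lam i = 1 := by
    have h1 := hρH.trace_eq_sum_eigenvalues
    rw [hρ.2] at h1
    rw [hlam, eigDesc, dif_pos hρH, sum_dSort]
    have h2 := congrArg Complex.re h1
    simpa using h2.symm
  have huniv : ∑ q : Fin N × Fin m, Pv q.1 q.2 = (N : ℝ) • (1 : Matrix (Fin n) (Fin n) ℂ) := by
    rw [Fintype.sum_prod_type]
    simp [hPvsum, Nat.cast_smul_eq_nsmul]
  refine ⟨fun k _ hk => ?_, ?_, ?_⟩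
  · obtain ⟨S, hScard, hS⟩ := exists_topSum_eq P hk
    -- the positions of the `k` largest entries, read as pairs `(x, a)`
    set T : Finset (Fin N × Fin m) := S.map finProdFinEquiv.symm.toEmbedding with hT
    have htr : topSum P k = (Matrix.trace ((∑ q ∈ T, Pv q.1 q.2) * ρ)).re := by
      rw [hS, hP, hT, Finset.sum_map, Finset.sum_mul, Matrix.trace_sum, Complex.re_sum]
      rfl
    have hbdd : BddAbove { r : ℝ | ∃ T : Finset (Fin N × Fin m), T.card = k ∧
        r = ∑ i, lam i * eigDesc (∑ q ∈ T, Pv q.1 q.2) i } := by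
      refine ((Set.finite_range fun T : Finset (Fin N × Fin m) =>
        ∑ i, lam i * eigDesc (∑ q ∈ T, Pv q.1 q.2) i).subset ?_).bddAbove
      rintro r ⟨T, -, rfl⟩
      exact ⟨T, rfl⟩
    rw [hs, htr]
    refine le_trans ?_ (le_csSup hbdd ⟨T, by rw [hT, Finset.card_map, hScard], rfl⟩)
    rw [Matrix.trace_mul_comm, hlam]
    exact trace_mul_le_sum_eigDesc hρH (hTH T)
  · have h1 : ∑ i, P i = (Matrix.trace ((∑ q : Fin N × Fin m, Pv q.1 q.2) * ρ)).re := by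
      rw [hP, Finset.sum_mul, Matrix.trace_sum, Complex.re_sum]
      exact Equiv.sum_comp finProdFinEquiv.symm
        (fun q : Fin N × Fin m => (Matrix.trace (Pv q.1 q.2 * ρ)).re)
    rw [h1, huniv]
    simp [hρ.2]
  · have hset : { r : ℝ | ∃ T : Finset (Fin N × Fin m), T.card = N * m ∧
        r = ∑ i, lam i * eigDesc (∑ q ∈ T, Pv q.1 q.2) i } = {(N : ℝ)} := by
      have hval : ∑ i, lam i * eigDesc (∑ q : Fin N × Fin m, Pv q.1 q.2) i = N := by
        simp [huniv, eigDesc_smul_one, ← Finset.sum_mul, hlamsum]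
      ext r
      constructor
      · rintro ⟨T, hT, rfl⟩
        obtain rfl : T = Finset.univ := by
          rw [← Finset.card_eq_iff_eq_univ, hT]; simp
        exact hval
      · rintro rfl
        exact ⟨Finset.univ, by simp, hval.symm⟩
    rw [hs, hset, csSup_singleton]
end
end
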